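/- The K-Bessel function K_λ on the symmetric cone Ω satisfies the second integral representation K_λ(x²) = Δ(x)^{n/r − λ} ∫_Ω e^{−(x|v + v^{-1})} Δ(v)^{−λ} dv for all x ∈ Ω. -/

import Mathlib

open MeasureTheory Real
open scoped RealInnerProductSpace

/-- The complex Gindikin Gamma function
`Γ_Ω(z) = (2π)^{r(r−1)d/4} ∏_{i=0}^{r-1} Γ(z − i·d/2)` of a symmetric cone of rank `r`
and multiplicity `d`. -/
noncomputable def gindikinGamma (r : ℕ) (d : ℝ) (z : ℂ) : ℂ :=
  (((2 * Real.pi) ^ ((r : ℝ) * ((r : ℝ) - 1) * d / 4) : ℝ) : ℂ) *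
    ∏ i ∈ Finset.range r, Complex.Gamma (z - (i : ℝ) * d / 2)

/-- The K-Bessel function `𝒦_λ(x) = ∫_Ω e^{−tr(v)−(x|v⁻¹)} Δ(v)^{−λ} dv` of a
symmetric cone `Ω` with determinant `Δ`, trace `tr` and inversion `jinv`. -/
noncomputable def coneKBessel {E : Type*} [NormedAddCommGroup E] [InnerProductSpace ℝ E]
    [MeasurableSpace E] (μ : Measure E) (Ω : Set E) (Δ tr : E → ℝ) (jinv : E → E)
    (lam : ℂ) (x : E) : ℂ :=
  ∫ v in Ω, Complex.exp (((-(tr v) - ⟪x, jinv v⟫ : ℝ) : ℂ)) * ((Δ v : ℂ) ^ (-lam)) ∂μ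

/-!
For `x ∈ Ω` with logarithm `k`, the map `g = exp (L k)`, with `L` the multiplication operators, is
`P(x^{1/2})`: it sends `e` to `x` and `x` to `x²`. Substituting `v ↦ g v` turns the Bessel integral
at `x²` into the second representation, given that `g` preserves `Ω`, that `(g v)⁻¹ = g⁻¹ v⁻¹`,
that `g` is symmetric, and that `|det g| = Δ(x)^{n/r}` and `Δ(g v) = Δ(x) Δ(v)`.

The first two facts come from the flow `t ↦ exp (t L k) v`. Along it the inverse evolves by
`exp (-t L k) v⁻¹`, because `(k v) v⁻¹ = v (k v⁻¹)`; so a limit point of the flow in the closure of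
`Ω` is still invertible and therefore lies in `Ω`. The last two are read off from the Laplace
transform of `Ω`. Its convergence also forces elements of `Ω` to pair nonnegatively, and this makes
the multiplication operators, hence `g`, symmetric.
-/

section Jordan

/-- A commutative bilinear product satisfying the Jordan identity `x² (x y) = x (x² y)`, recorded
by its multiplication operators `mul x`. -/
structure IsJordanProduct {R A : Type*} [CommRing R] [AddCommGroup A] [Module R A]
    (mul : A →ₗ[R] A →ₗ[R] A) : Prop where
  comm : ∀ x y, mul x y = mul y x
  jordan : ∀ x y, mul (mul x x) (mul x y) = mul x (mul (mul x x) y)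

/-- A Jordan product with unit `e`. -/
structure IsUnitalJordanProduct {R A : Type*} [CommRing R] [AddCommGroup A] [Module R A]
    (mul : A →ₗ[R] A →ₗ[R] A) (e : A) : Prop extends IsJordanProduct mul where
  one_mul : ∀ x, mul e x = x

variable {K A : Type*} [Field K] [AddCommGroup A] [Module K A]
  {mul : A →ₗ[K] A →ₗ[K] A} {e : A}

lemma IsUnitalJordanProduct.mul_one (h : IsUnitalJordanProduct mul e) (x : A) : mul x e = x := by
  rw [h.comm, h.one_mul]

lemma IsJordanProduct.linearized_jordan [NeZero (2 : K)] (h : IsJordanProduct mul) (a b c d : A) :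
    mul a (mul (mul b c) d) + mul b (mul (mul a c) d) + mul c (mul (mul a b) d)
      = mul (mul b c) (mul a d) + mul (mul a c) (mul b d) + mul (mul a b) (mul c d) := by
  have habc := h.jordan (a + b + c) d
  have hab := h.jordan (a + b) d
  have hac := h.jordan (a + c) d
  have hbc := h.jordan (b + c) d
  have ha := h.jordan a d
  have hb := h.jordan b d
  have hc := h.jordan c d
  simp only [map_add, LinearMap.add_apply, h.comm b a, h.comm c a, h.comm c b]
    at habc hab hac hbc ha hb hc ⊢
  refine smul_right_injective A (two_ne_zero (α := K)) ?_
  linear_combination (norm := module) -habc + hab + hac + hbc - ha - hb - hc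

lemma IsJordanProduct.commutator_mul_self [NeZero (2 : K)] (h : IsJordanProduct mul) (x y c : A) :
    mul x (mul y (mul c c)) - mul y (mul x (mul c c))
      = (2 : K) • mul c (mul x (mul y c) - mul y (mul x c)) := by
  have hx := h.linearized_jordan x c c y
  have hy := h.linearized_jordan y c c x
  rw [h.comm (mul c c) y, h.comm (mul x c) y, h.comm c y, h.comm x y] at hx
  rw [h.comm (mul c c) x, h.comm (mul y c) x, h.comm c x, h.comm (mul y c) (mul x c)] at hy
  rw [map_sub]
  linear_combination (norm := module) hx - hy

lemma IsJordanProduct.mul_mul_mul_eq [NeZero (2 : K)] (h : IsJordanProduct mul) (x b : A) :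
    mul (mul x (mul x b)) = (2 : K) • (mul (mul x b) * mul x) + mul (mul x x) * mul b
      - mul x * mul x * mul b - mul b * mul x * mul x := by
  ext y
  have hlin := h.linearized_jordan y x b x
  rw [h.comm y (mul (mul x b) x), h.comm (mul x b) x, h.comm y b, h.comm (mul b y) x,
    h.comm y x, h.comm (mul x y) x, h.comm (mul b y) (mul x x), h.comm (mul x y) (mul b x),
    h.comm b x] at hlin
  simp only [LinearMap.add_apply, LinearMap.sub_apply, LinearMap.smul_apply, Module.End.mul_apply]
  linear_combination (norm := module) hlin

/-- The value `p(x)` of a polynomial at an element of a Jordan algebra with unit `e`. The powers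
of `x` are iterated products `x (x (⋯ (x e)))`, which is unambiguous by power associativity. -/
noncomputable def jordanEval (mul : A →ₗ[K] A →ₗ[K] A) (e x : A) : Polynomial K →ₗ[K] A :=
  LinearMap.applyₗ e ∘ₗ (Polynomial.aeval (mul x)).toLinearMap

lemma jordanEval_apply (x : A) (p : Polynomial K) :
    jordanEval mul e x p = Polynomial.aeval (mul x) p e := rfl

lemma aeval_jordanEval (x : A) (p q : Polynomial K) :
    Polynomial.aeval (mul x) p (jordanEval mul e x q) = jordanEval mul e x (p * q) := by
  rw [jordanEval_apply, jordanEval_apply, map_mul, Module.End.mul_apply]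

lemma mul_jordanEval_eq_X_mul (x : A) (p : Polynomial K) :
    mul x (jordanEval mul e x p) = jordanEval mul e x (Polynomial.X * p) := by
  rw [← aeval_jordanEval, Polynomial.aeval_X]

namespace IsUnitalJordanProduct

variable [NeZero (2 : K)]

lemma commute_mul_pow (h : IsUnitalJordanProduct mul e) (x : A) (n : ℕ) :
    Commute (mul x) (mul ((mul x ^ n) e)) := by
  have hsq : Commute (mul x) (mul (mul x x)) := LinearMap.ext fun y => (h.jordan x y).symm
  induction n using Nat.twoStepInduction with
  | zero =>
    have hone : mul e = 1 := LinearMap.ext h.one_mul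
    rw [pow_zero, Module.End.one_apply, hone]
    exact Commute.one_right _
  | one => rw [pow_one, h.mul_one]
  | more n hn hn1 =>
    rw [pow_succ', Module.End.mul_apply] at hn1
    rw [pow_succ', pow_succ', Module.End.mul_apply, Module.End.mul_apply, h.mul_mul_mul_eq]
    have hx : Commute (mul x) (mul x) := Commute.refl _
    exact ((((hn1.mul_right hx).smul_right _).add_right (hsq.mul_right hn)).sub_right
      ((hx.mul_right hx).mul_right hn)).sub_right ((hn.mul_right hx).mul_right hx)

lemma commute_mul_jordanEval (h : IsUnitalJordanProduct mul e) (x : A) (p : Polynomial K) :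
    Commute (mul x) (mul (jordanEval mul e x p)) := by
  induction p using Polynomial.induction_on' with
  | add p q hp hq => simpa only [map_add] using hp.add_right hq
  | monomial n a =>
    rw [jordanEval_apply, Polynomial.aeval_monomial, ← Algebra.smul_def, LinearMap.smul_apply,
      map_smul]
    exact (h.commute_mul_pow x n).smul_right a

lemma mul_jordanEval_apply (h : IsUnitalJordanProduct mul e) (x : A) (p : Polynomial K) {y : A}
    (hy : y ∈ (jordanEval mul e x).range) :
    mul (jordanEval mul e x p) y = Polynomial.aeval (mul x) p y := by
  obtain ⟨q, rfl⟩ := hy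
  have hcomm : Commute (mul (jordanEval mul e x p)) (Polynomial.aeval (mul x) q) :=
    Algebra.commute_of_mem_adjoin_singleton_of_commute
      (Polynomial.aeval_mem_adjoin_singleton K (mul x)) (h.commute_mul_jordanEval x p).symm
  calc mul (jordanEval mul e x p) (jordanEval mul e x q)
      = Polynomial.aeval (mul x) q (mul (jordanEval mul e x p) e) := LinearMap.congr_fun hcomm.eq e
    _ = Polynomial.aeval (mul x) p (jordanEval mul e x q) := by
      rw [h.mul_one, aeval_jordanEval, aeval_jordanEval, mul_comm]

lemma mul_jordanEval_jordanEval (h : IsUnitalJordanProduct mul e) (x : A) (p q : Polynomial K) :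
    mul (jordanEval mul e x p) (jordanEval mul e x q) = jordanEval mul e x (p * q) := by
  rw [h.mul_jordanEval_apply x p ⟨q, rfl⟩, aeval_jordanEval]

end IsUnitalJordanProduct

end Jordan

section Idempotents

/-- A finite family of nonzero, pairwise orthogonal idempotents of a (not necessarily associative)
algebra with sum `e`. Unlike in a Jordan frame, the idempotents need not be primitive. -/
structure IsCompleteIdempotents {R A ι : Type*} [CommRing R] [AddCommGroup A] [Module R A]
    [Fintype ι] (mul : A →ₗ[R] A →ₗ[R] A) (e : A) (c : ι → A) : Prop where
  ne_zero : ∀ i, c i ≠ 0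
  mul_self : ∀ i, mul (c i) (c i) = c i
  mul_eq_zero : ∀ i j, i ≠ j → mul (c i) (c j) = 0
  sum_eq : ∑ i, c i = e

namespace IsCompleteIdempotents

variable {R A ι : Type*} [CommRing R] [AddCommGroup A] [Module R A] [Fintype ι]
  {mul : A →ₗ[R] A →ₗ[R] A} {e : A} {c : ι → A}

lemma sum_smul_mul (h : IsCompleteIdempotents mul e c) (f : ι → R) (j : ι) :
    mul (∑ i, f i • c i) (c j) = f j • c j := by
  simp only [map_sum, map_smul, LinearMap.sum_apply, LinearMap.smul_apply]
  rw [Fintype.sum_eq_single j fun i hij => by rw [h.mul_eq_zero i j hij, smul_zero], h.mul_self]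

lemma sum_smul_mul_sum_smul (h : IsCompleteIdempotents mul e c) (f g : ι → R) :
    mul (∑ i, f i • c i) (∑ i, g i • c i) = ∑ i, (f i * g i) • c i := by
  simp only [map_sum (mul _), map_smul (mul _), h.sum_smul_mul, smul_smul, mul_comm]

end IsCompleteIdempotents

end Idempotents

section Spectral

variable {E : Type*} [NormedAddCommGroup E] [InnerProductSpace ℝ E]

/-- A unital Jordan product for which the inner product is the trace form `⟪x y, e⟫`, where
`⟪·, e⟫` plays the role of the trace. -/
structure IsTracialJordanProduct (mul : E →ₗ[ℝ] E →ₗ[ℝ] E) (e : E) : Prop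
    extends IsUnitalJordanProduct mul e where
  inner_eq : ∀ x y, ⟪x, y⟫ = ⟪mul x y, e⟫

variable {mul : E →ₗ[ℝ] E →ₗ[ℝ] E} {e : E}

namespace IsTracialJordanProduct

lemma inner_idempotent (h : IsTracialJordanProduct mul e) {c : E} (hc : mul c c = c) :
    ⟪c, e⟫ = ⟪c, c⟫ := by
  rw [h.inner_eq c c, hc]

lemma inner_mul_jordanEval (h : IsTracialJordanProduct mul e) (x : E) (p q : Polynomial ℝ) :
    ⟪mul x (jordanEval mul e x p), jordanEval mul e x q⟫
      = ⟪jordanEval mul e x p, mul x (jordanEval mul e x q)⟫ := by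
  rw [mul_jordanEval_eq_X_mul, mul_jordanEval_eq_X_mul, h.inner_eq,
    h.inner_eq (jordanEval mul e x p), h.mul_jordanEval_jordanEval, h.mul_jordanEval_jordanEval,
    mul_left_comm, mul_assoc]

lemma exists_orthonormalBasis_eigenvectors [FiniteDimensional ℝ E]
    (h : IsTracialJordanProduct mul e) (x : E) :
    ∃ (n : ℕ) (b : OrthonormalBasis (Fin n) ℝ (jordanEval mul e x).range) (lam : Fin n → ℝ),
      ∀ i, mul x (b i : E) = lam i • (b i : E) := by
  have hinv : ∀ y ∈ (jordanEval mul e x).range, mul x y ∈ (jordanEval mul e x).range := by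
    rintro _ ⟨p, rfl⟩
    exact ⟨Polynomial.X * p, (mul_jordanEval_eq_X_mul x p).symm⟩
  have hsymm : ((mul x).restrict hinv).IsSymmetric := by
    rintro ⟨_, p, rfl⟩ ⟨_, q, rfl⟩
    exact h.inner_mul_jordanEval x p q
  exact ⟨_, hsymm.eigenvectorBasis rfl, hsymm.eigenvalues rfl, fun i =>
    congrArg Subtype.val (hsymm.apply_eigenvectorBasis rfl i)⟩

variable {x : E} {n : ℕ} {b : OrthonormalBasis (Fin n) ℝ (jordanEval mul e x).range}
  {lam : Fin n → ℝ}

lemma mul_jordanEval_eigenvector (h : IsTracialJordanProduct mul e)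
    (hb : ∀ i, mul x (b i : E) = lam i • (b i : E)) (p : Polynomial ℝ) (i : Fin n) :
    mul (jordanEval mul e x p) (b i : E) = p.eval (lam i) • (b i : E) := by
  rw [h.mul_jordanEval_apply x p (b i).2, Module.End.aeval_apply_of_mem_apply_eq_smul (hb i)]

-- `b i * b j` is a multiple of both `b i` and `b j`, and these are linearly independent.
lemma mul_eigenvector_eq_zero (h : IsTracialJordanProduct mul e)
    (hb : ∀ i, mul x (b i : E) = lam i • (b i : E)) {i j : Fin n} (hij : i ≠ j) :
    mul (b i : E) (b j : E) = 0 := by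
  obtain ⟨p, hp⟩ := (b i).2
  obtain ⟨q, hq⟩ := (b j).2
  have hpj := h.mul_jordanEval_eigenvector hb p j
  have hqi := h.mul_jordanEval_eigenvector hb q i
  rw [hp] at hpj
  rw [hq, h.comm, hpj] at hqi
  have hsmul : p.eval (lam j) • b j = q.eval (lam i) • b i := Subtype.ext hqi
  have hinner := congrArg (fun y => ⟪b j, y⟫) hsmul
  simp only [inner_smul_right, b.inner_eq_zero hij.symm, b.inner_eq_one, mul_one, mul_zero]
    at hinner
  rw [hpj, hinner, zero_smul]

lemma isCompleteIdempotents_eigenvectors (h : IsTracialJordanProduct mul e)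
    (hb : ∀ i, mul x (b i : E) = lam i • (b i : E)) :
    IsCompleteIdempotents mul e fun i => ⟪(b i : E), e⟫ • (b i : E) := by
  have he : e ∈ (jordanEval mul e x).range := ⟨1, by rw [jordanEval_apply, map_one]; rfl⟩
  have hsum : ∑ i, ⟪(b i : E), e⟫ • (b i : E) = e := by
    simpa using congrArg Subtype.val (b.sum_repr' ⟨e, he⟩)
  have hmul (i) : ⟪(b i : E), e⟫ • mul (b i : E) (b i : E) = b i := by
    have hone := congrArg (mul (b i : E)) hsum
    rwa [h.mul_one, map_sum, Fintype.sum_eq_single i fun j hji => by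
      rw [map_smul, h.mul_eigenvector_eq_zero hb hji.symm, smul_zero], map_smul] at hone
  refine ⟨fun i hi => ?_, fun i => ?_, fun i j hij => ?_, hsum⟩
  · have hzero : ⟪(b i : E), e⟫ = 0 :=
      (smul_eq_zero.1 hi).resolve_right fun h0 => b.orthonormal.ne_zero i (Subtype.ext h0)
    refine b.orthonormal.ne_zero i (Subtype.ext ?_)
    rw [← hmul i, hzero, zero_smul]
    rfl
  · rw [map_smul, map_smul, LinearMap.smul_apply, hmul]
  · rw [map_smul, map_smul, LinearMap.smul_apply, h.mul_eigenvector_eq_zero hb hij, smul_zero,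
      smul_zero]

theorem exists_spectral_decomposition [FiniteDimensional ℝ E] (h : IsTracialJordanProduct mul e)
    (x : E) :
    ∃ (n : ℕ) (c : Fin n → E) (lam : Fin n → ℝ), IsCompleteIdempotents mul e c ∧
      x = ∑ i, lam i • c i ∧ ∀ i, Commute (mul x) (mul (c i)) := by
  obtain ⟨n, b, lam, hb⟩ := h.exists_orthonormalBasis_eigenvectors x
  have hc := h.isCompleteIdempotents_eigenvectors hb
  refine ⟨n, _, lam, hc, ?_, fun i => ?_⟩
  · calc x = ∑ i, mul x (⟪(b i : E), e⟫ • (b i : E)) := by rw [← map_sum, hc.sum_eq, h.mul_one]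
      _ = ∑ i, lam i • ⟪(b i : E), e⟫ • (b i : E) :=
        Finset.sum_congr rfl fun i _ => by rw [map_smul, hb, smul_comm]
  · obtain ⟨p, hp⟩ := (b i).2
    rw [map_smul, ← hp]
    exact (h.commute_mul_jordanEval x p).smul_right _

end IsTracialJordanProduct

end Spectral

section Cone

variable {V : Type*} [NormedAddCommGroup V] [NormedSpace ℝ V]

/-- The symmetric cone of a Jordan product, defined as the interior of its set of squares. -/
def symCone (mul : V →ₗ[ℝ] V →ₗ[ℝ] V) : Set V := interior {x | ∃ y, x = mul y y}

section Squares

variable {mul : V →ₗ[ℝ] V →ₗ[ℝ] V} {e : V}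

lemma isOpen_symCone : IsOpen (symCone mul) := isOpen_interior

lemma exists_mul_self_of_mem_symCone {x : V} (hx : x ∈ symCone mul) : ∃ y, x = mul y y :=
  (interior_subset hx : x ∈ {x | ∃ y, x = mul y y})

open scoped Pointwise in
lemma smul_mem_symCone {t : ℝ} (ht : 0 < t) {x : V} (hx : x ∈ symCone mul) :
    t • x ∈ symCone mul := by
  have hsub : t • {x | ∃ y, x = mul y y} ⊆ {x | ∃ y, x = mul y y} := by
    rintro _ ⟨_, ⟨y, rfl⟩, rfl⟩
    exact ⟨√t • y, by
      rw [map_smul, map_smul, LinearMap.smul_apply, smul_smul, Real.mul_self_sqrt ht.le]⟩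
  refine interior_mono hsub ?_
  rw [interior_smul₀ ht.ne']
  exact Set.smul_mem_smul_set hx

variable [FiniteDimensional ℝ V]

-- The derivative `2 (mul z)` of squaring at `z` is surjective, so squaring is open at `z`.
lemma mul_self_mem_symCone (hcomm : ∀ x y, mul x y = mul y x) {z : V}
    (hz : Function.Injective (mul z)) : mul z z ∈ symCone mul := by
  have := FiniteDimensional.complete ℝ V
  let L := mul.toContinuousBilinearMap
  have hderiv : HasStrictFDerivAt (fun y => L y y) (L z + L.flip z) z :=
    L.hasStrictFDerivAt.clm_apply (hasStrictFDerivAt_id z)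
  have hsurj : (L z + L.flip z).range = ⊤ := by
    refine LinearMap.range_eq_top.2 fun w => ?_
    obtain ⟨u, hu⟩ := LinearMap.injective_iff_surjective.1 hz ((1 / 2 : ℝ) • w)
    refine ⟨u, ?_⟩
    change mul z u + mul u z = w
    rw [hcomm u z, hu]
    module
  rw [symCone, mem_interior_iff_mem_nhds]
  change _ ∈ nhds (L z z)
  rw [← hderiv.map_nhds_eq_of_surj hsurj]
  exact Filter.mem_map.2 (Filter.univ_mem' fun y => ⟨y, rfl⟩)

lemma dense_setOf_injective_mul_add_smul (hone : ∀ x, mul e x = x) (y : V) :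
    Dense {a : ℝ | Function.Injective (mul (y + a • e))} := by
  have hfin : {a : ℝ | Module.End.HasEigenvalue (mul y) (-a)}.Finite :=
    (Module.End.finite_hasEigenvalue (mul y)).preimage neg_injective.injOn
  refine (hfin.countable.dense_compl ℝ).mono fun a ha => ?_
  refine (injective_iff_map_eq_zero _).2 fun w hw => ?_
  by_contra hw0
  refine ha (Module.End.hasEigenvalue_of_hasEigenvector (x := w) ⟨?_, hw0⟩)
  rw [map_add, map_smul, LinearMap.add_apply, LinearMap.smul_apply, hone] at hw
  rw [Module.End.mem_eigenspace_iff, neg_smul]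
  exact eq_neg_of_add_eq_zero_left hw

lemma mul_self_mem_closure_symCone (hcomm : ∀ x y, mul x y = mul y x) (hone : ∀ x, mul e x = x)
    (y : V) : mul y y ∈ closure (symCone mul) := by
  let L := mul.toContinuousBilinearMap
  have hcont : Continuous fun a : ℝ => L (y + a • e) (y + a • e) := by fun_prop
  have hmaps : Set.MapsTo (fun a : ℝ => L (y + a • e) (y + a • e))
      {a | Function.Injective (mul (y + a • e))} (symCone mul) :=
    fun a ha => mul_self_mem_symCone hcomm ha
  have hmem := map_mem_closure hcont (dense_setOf_injective_mul_add_smul hone y 0) hmaps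
  rwa [zero_smul, add_zero] at hmem

lemma IsUnitalJordanProduct.one_mem_symCone (h : IsUnitalJordanProduct mul e) :
    e ∈ symCone mul := by
  have hinj : Function.Injective (mul e) := fun x y hxy => by rwa [h.one_mul, h.one_mul] at hxy
  simpa only [h.one_mul] using mul_self_mem_symCone h.comm hinj

end Squares

variable {E : Type*} [NormedAddCommGroup E] [InnerProductSpace ℝ E]

/-- A tracial Jordan product any two squares of which have nonnegative inner product. This is a
form of the Euclidean condition that the multiplication operators be symmetric, which is recovered
in `IsEuclideanJordanProduct.inner_mul_left`. -/
structure IsEuclideanJordanProduct (mul : E →ₗ[ℝ] E →ₗ[ℝ] E) (e : E) : Prop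
    extends IsTracialJordanProduct mul e where
  inner_mul_self_nonneg : ∀ x y, 0 ≤ ⟪mul x x, mul y y⟫

namespace IsEuclideanJordanProduct

variable {mul : E →ₗ[ℝ] E →ₗ[ℝ] E} {e : E}

-- The inner product of `c = c²` with `(u + q (e - c))²` is affine in `q` with slope `⟪u, e⟫ / 2`.
lemma inner_eq_zero_of_mul_eq_half_smul (h : IsEuclideanJordanProduct mul e) {c u : E}
    (hc : mul c c = c) (hu : mul c u = (1 / 2 : ℝ) • u) : ⟪u, e⟫ = 0 := by
  have haffine (q : ℝ) : 0 ≤ ⟪mul c (mul u u), e⟫ + q * (⟪u, e⟫ / 2) := by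
    have hsq : mul c (mul (u + q • (e - c)) (u + q • (e - c)))
        = mul c (mul u u) + (q / 2) • u := by
      simp only [map_add, map_sub, map_smul, LinearMap.add_apply, LinearMap.sub_apply,
        LinearMap.smul_apply, h.one_mul, h.mul_one, h.comm u c, hu, hc]
      module
    calc 0 ≤ ⟪mul c c, mul (u + q • (e - c)) (u + q • (e - c))⟫ := h.inner_mul_self_nonneg _ _
      _ = ⟪mul c (mul u u), e⟫ + q * (⟪u, e⟫ / 2) := by
        rw [hc, h.inner_eq, hsq, inner_add_left, real_inner_smul_left]
        ring
  by_contra hne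
  have hneg := haffine (-(⟪mul c (mul u u), e⟫ + 1) / (⟪u, e⟫ / 2))
  rw [div_mul_cancel₀ _ (div_ne_zero hne two_ne_zero)] at hneg
  linarith

lemma inner_idempotent_mul_left (h : IsEuclideanJordanProduct mul e) {c : E} (hc : mul c c = c)
    (x y : E) : ⟪mul c x, y⟫ = ⟪x, mul c y⟫ := by
  have hcomm := h.commutator_mul_self y x c
  rw [hc] at hcomm
  have hhalf : mul c (mul y (mul x c) - mul x (mul y c))
      = (1 / 2 : ℝ) • (mul y (mul x c) - mul x (mul y c)) := by
    conv_rhs => rw [hcomm]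
    module
  have hzero := h.inner_eq_zero_of_mul_eq_half_smul hc hhalf
  rw [inner_sub_left, sub_eq_zero] at hzero
  rw [h.inner_eq, h.inner_eq x, h.comm (mul c x) y, h.comm c x, h.comm c y, hzero]

variable {ι : Type*} [Fintype ι] {c : ι → E} {lam : ι → ℝ}

lemma inner_mul_self_nonneg_of_mem_closure (h : IsEuclideanJordanProduct mul e) {u : E}
    (hu : u ∈ closure (symCone mul)) (z : E) : 0 ≤ ⟪u, mul z z⟫ := by
  have hclosed : IsClosed {u : E | 0 ≤ ⟪u, mul z z⟫} := isClosed_le continuous_const (by fun_prop)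
  refine closure_minimal (fun x hx => ?_) hclosed hu
  obtain ⟨y, rfl⟩ := exists_mul_self_of_mem_symCone hx
  exact h.inner_mul_self_nonneg y z

lemma inner_sum_smul_idempotent (h : IsEuclideanJordanProduct mul e)
    (hc : IsCompleteIdempotents mul e c) (lam : ι → ℝ) (i : ι) :
    ⟪∑ j, lam j • c j, c i⟫ = lam i * ⟪c i, c i⟫ := by
  rw [h.inner_eq, hc.sum_smul_mul, real_inner_smul_left, h.inner_idempotent (hc.mul_self i)]

lemma pos_of_sum_smul_mem_symCone (h : IsEuclideanJordanProduct mul e)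
    (hc : IsCompleteIdempotents mul e c) (hx : ∑ i, lam i • c i ∈ symCone mul) (i : ι) :
    0 < lam i := by
  have hcont : Continuous fun a : ℝ => ∑ i, lam i • c i - a • e := by fun_prop
  have hev : ∀ᶠ a : ℝ in nhds 0, ∑ i, lam i • c i - a • e ∈ symCone mul :=
    hcont.continuousAt.eventually_mem (isOpen_symCone.mem_nhds (by rwa [zero_smul, sub_zero]))
  obtain ⟨a, ha, hmem⟩ := hev.exists_gt
  have hnonneg := h.inner_mul_self_nonneg_of_mem_closure (subset_closure hmem) (c i)
  have hpos : 0 < ⟪c i, c i⟫ := real_inner_self_pos.2 (hc.ne_zero i)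
  rw [hc.mul_self, inner_sub_left, h.inner_sum_smul_idempotent hc, real_inner_smul_left,
    real_inner_comm (c i) e, h.inner_idempotent (hc.mul_self i), ← sub_mul] at hnonneg
  exact ha.trans_le (sub_nonneg.1 (nonneg_of_mul_nonneg_left hnonneg hpos))

variable [FiniteDimensional ℝ E]

lemma inner_mul_left (h : IsEuclideanJordanProduct mul e) (a x y : E) :
    ⟪mul a x, y⟫ = ⟪x, mul a y⟫ := by
  obtain ⟨n, c, lam, hc, rfl, -⟩ := h.exists_spectral_decomposition a
  simp only [map_sum, map_smul, LinearMap.sum_apply, LinearMap.smul_apply, sum_inner, inner_sum,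
    real_inner_smul_left, real_inner_smul_right, h.inner_idempotent_mul_left (hc.mul_self _)]

lemma mul_sum_smul_injective (h : IsEuclideanJordanProduct mul e)
    (hc : IsCompleteIdempotents mul e c) (hlam : ∀ i, 0 < lam i) :
    Function.Injective (mul (∑ i, lam i • c i)) := by
  refine (injective_iff_map_eq_zero _).2 fun z hz => ?_
  have hnonneg (i) : 0 ≤ ⟪c i, mul z z⟫ := by
    simpa only [hc.mul_self] using h.inner_mul_self_nonneg (c i) z
  have hsum : ∑ i, lam i * ⟪c i, mul z z⟫ = 0 :=
    calc ∑ i, lam i * ⟪c i, mul z z⟫ = ⟪∑ i, lam i • c i, mul z z⟫ := by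
          simp only [sum_inner, real_inner_smul_left]
      _ = ⟪mul (∑ i, lam i • c i) z, z⟫ := by rw [← h.inner_mul_left, h.comm z]
      _ = 0 := by rw [hz, inner_zero_left]
  have hzero (i) : ⟪c i, mul z z⟫ = 0 := by
    have hi := (Finset.sum_eq_zero_iff_of_nonneg fun i _ =>
      mul_nonneg (hlam i).le (hnonneg i)).1 hsum i (Finset.mem_univ i)
    exact (mul_eq_zero.1 hi).resolve_left (hlam i).ne'
  rw [← inner_self_eq_zero (𝕜 := ℝ), h.inner_eq, ← hc.sum_eq, inner_sum]
  exact Finset.sum_eq_zero fun i _ => by rw [real_inner_comm, hzero]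

lemma sum_smul_mem_symCone (h : IsEuclideanJordanProduct mul e)
    (hc : IsCompleteIdempotents mul e c) (hlam : ∀ i, 0 < lam i) :
    ∑ i, lam i • c i ∈ symCone mul := by
  have hsq := mul_self_mem_symCone h.comm
    (h.mul_sum_smul_injective hc (lam := fun i => √(lam i)) fun i => Real.sqrt_pos.2 (hlam i))
  simpa only [hc.sum_smul_mul_sum_smul, Real.mul_self_sqrt (hlam _).le] using hsq

lemma mul_injective_of_mem_symCone (h : IsEuclideanJordanProduct mul e) {x : E}
    (hx : x ∈ symCone mul) : Function.Injective (mul x) := by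
  obtain ⟨n, c, lam, hc, rfl, -⟩ := h.exists_spectral_decomposition x
  exact h.mul_sum_smul_injective hc (h.pos_of_sum_smul_mem_symCone hc hx)

lemma mem_symCone_of_mem_closure (h : IsEuclideanJordanProduct mul e) {u w : E}
    (hu : u ∈ closure (symCone mul)) (huw : mul u w = e) : u ∈ symCone mul := by
  obtain ⟨n, c, lam, hc, rfl, -⟩ := h.exists_spectral_decomposition u
  refine h.sum_smul_mem_symCone hc fun i => ?_
  have hpos : 0 < ⟪c i, c i⟫ := real_inner_self_pos.2 (hc.ne_zero i)
  have hnonneg := h.inner_mul_self_nonneg_of_mem_closure hu (c i)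
  rw [hc.mul_self, h.inner_sum_smul_idempotent hc] at hnonneg
  refine (nonneg_of_mul_nonneg_left hnonneg hpos).lt_of_ne fun hzero => hpos.ne ?_
  calc 0 = ⟪mul (∑ j, lam j • c j) (c i), w⟫ := by
        rw [hc.sum_smul_mul, ← hzero, zero_smul, inner_zero_left]
    _ = ⟪c i, c i⟫ := by rw [h.inner_mul_left, huw, h.inner_idempotent (hc.mul_self i)]

end IsEuclideanJordanProduct

end Cone

section Flow

lemma exp_apply_eq_exp_smul {V : Type*} [NormedAddCommGroup V] [NormedSpace ℝ V] [CompleteSpace V]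
    {T : V →L[ℝ] V} {c : V} {a : ℝ} (hc : T c = a • c) :
    NormedSpace.exp T c = Real.exp a • c := by
  have hpow (n : ℕ) : (T ^ n) c = a ^ n • c := by
    induction n with
    | zero => rw [pow_zero, pow_zero, one_smul, one_apply_eq_self]
    | succ n ih =>
      rw [pow_succ', mul_apply_eq_comp, ih, map_smul, hc, smul_smul, pow_succ]
  have hT := (ContinuousLinearMap.apply ℝ V c).hasSum
    (NormedSpace.exp_series_hasSum_exp' (𝕂 := ℝ) T)
  have ha := (NormedSpace.exp_series_hasSum_exp' (𝕂 := ℝ) a).smul_const c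
  rw [← Real.exp_eq_exp_ℝ] at ha
  refine hT.unique (ha.congr_fun fun n => ?_)
  rw [ContinuousLinearMap.apply_apply, smul_apply, hpow, smul_smul, smul_eq_mul]

variable {V : Type*} [NormedAddCommGroup V] [NormedSpace ℝ V] [FiniteDimensional ℝ V]

section MulExp

/-- The exponential of the multiplication operator of `k`. In a Euclidean Jordan algebra it equals
`P(exp (k / 2))`, where `P` is the quadratic representation. -/
noncomputable def mulExp (mul : V →ₗ[ℝ] V →ₗ[ℝ] V) (k : V) : V ≃L[ℝ] V :=
  have := FiniteDimensional.complete ℝ V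
  let := NormedAlgebra.restrictScalars ℚ ℝ (V →L[ℝ] V)
  let := NormedSpace.invertibleExp (mul.toContinuousBilinearMap k)
  ContinuousLinearEquiv.ofUnit (unitOfInvertible (NormedSpace.exp (mul.toContinuousBilinearMap k)))

variable (mul : V →ₗ[ℝ] V →ₗ[ℝ] V)

lemma mulExp_apply (k x : V) :
    mulExp mul k x = NormedSpace.exp (mul.toContinuousBilinearMap k) x := rfl

lemma mulExp_neg (k : V) : mulExp mul (-k) = (mulExp mul k).symm := by
  ext x
  rw [mulExp_apply, map_neg]
  rfl

lemma mulExp_zero_apply (x : V) : mulExp mul 0 x = x := by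
  rw [mulExp_apply, map_zero, NormedSpace.exp_zero]
  rfl

variable {mul}

lemma mulExp_apply_eq_exp_smul {k c : V} {a : ℝ} (hc : mul k c = a • c) :
    mulExp mul k c = Real.exp a • c :=
  have := FiniteDimensional.complete ℝ V
  exp_apply_eq_exp_smul (T := mul.toContinuousBilinearMap k) hc

lemma hasDerivAt_mulExp_smul_apply (k x : V) (t : ℝ) :
    HasDerivAt (fun s : ℝ => mulExp mul (s • k) x) (mul k (mulExp mul (t • k) x)) t := by
  have := FiniteDimensional.complete ℝ V
  let T := mul.toContinuousBilinearMap k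
  have hderiv := (hasDerivAt_exp_smul_const' (𝕂 := ℝ) T t).clm_apply (hasDerivAt_const t x)
  rw [map_zero, add_zero, mul_apply_eq_comp] at hderiv
  simp only [mulExp_apply, map_smul]
  exact hderiv

lemma hasDerivAt_mulExp_smul_apply_zero {k : V} {W : ℝ → V} {t : ℝ}
    (hW : HasDerivAt W (-mul k (W t)) t) :
    HasDerivAt (fun s : ℝ => mulExp mul (s • k) (W s)) 0 t := by
  have := FiniteDimensional.complete ℝ V
  let T := mul.toContinuousBilinearMap k
  have hderiv := (hasDerivAt_exp_smul_const (𝕂 := ℝ) T t).clm_apply hW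
  rw [map_neg, mul_apply_eq_comp] at hderiv
  simpa only [mulExp_apply, map_smul] using hderiv.congr_deriv (add_neg_cancel _)

lemma continuous_mulExp_smul_apply (k x : V) :
    Continuous fun s : ℝ => mulExp mul (s • k) x :=
  continuous_iff_continuousAt.2 fun t => (hasDerivAt_mulExp_smul_apply k x t).continuousAt

end MulExp

section JordanInverse

lemma hasDerivAt_ringInverse {R : Type*} [NormedRing R] [HasSummableGeomSeries R]
    [NormedAlgebra ℝ R] {f : ℝ → R} {f' : R} {t : ℝ} (hf : HasDerivAt f f' t) (ht : IsUnit (f t)) :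
    HasDerivAt (fun s => Ring.inverse (f s))
      (-(Ring.inverse (f t) * f' * Ring.inverse (f t))) t := by
  obtain ⟨u, hu⟩ := ht
  have hinv := hasFDerivAt_ringInverse (𝕜 := ℝ) u
  rw [← Ring.inverse_unit, hu] at hinv
  exact hinv.comp_hasDerivAt t hf

/-- The solution `w` of `u w = e`, which is the Jordan inverse of `u` when multiplication by `u` is
injective. It is `0` otherwise. -/
noncomputable def jordanInverse (mul : V →ₗ[ℝ] V →ₗ[ℝ] V) (e u : V) : V :=
  Ring.inverse (mul.toContinuousBilinearMap u) e

variable {mul : V →ₗ[ℝ] V →ₗ[ℝ] V} {e u : V}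

lemma isUnit_toContinuousBilinearMap (hu : Function.Injective (mul u)) :
    IsUnit (mul.toContinuousBilinearMap u) :=
  have := FiniteDimensional.complete ℝ V
  ContinuousLinearMap.isUnit_iff_bijective.2 ⟨hu, LinearMap.injective_iff_surjective.1 hu⟩

lemma mul_jordanInverse (hu : Function.Injective (mul u)) : mul u (jordanInverse mul e u) = e :=
  congrArg (fun T : V →L[ℝ] V => T e)
    (Ring.mul_inverse_cancel _ (isUnit_toContinuousBilinearMap hu))

-- `hw` is the derivative of `u w = e` along the curve `U`.
lemma hasDerivAt_jordanInverse {U : ℝ → V} {U' w' : V} {t : ℝ} (hU : HasDerivAt U U' t)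
    (hinj : Function.Injective (mul (U t)))
    (hw : mul U' (jordanInverse mul e (U t)) = mul (U t) w') :
    HasDerivAt (fun s => jordanInverse mul e (U s)) (-w') t := by
  have := FiniteDimensional.complete ℝ V
  let L := mul.toContinuousBilinearMap
  have hunit : IsUnit (L (U t)) := isUnit_toContinuousBilinearMap hinj
  have hLU : HasDerivAt (fun s => L (U s)) (L U') t := L.hasFDerivAt.comp_hasDerivAt t hU
  have hderiv := (hasDerivAt_ringInverse hLU hunit).clm_apply (hasDerivAt_const t e)
  refine hderiv.congr_deriv ?_
  have hcancel : (Ring.inverse (L (U t)) * L (U t)) w' = w' := by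
    rw [Ring.inverse_mul_cancel _ hunit, one_apply_eq_self]
  rw [map_zero, add_zero, neg_apply, neg_inj, ← hcancel]
  exact congrArg (Ring.inverse (L (U t)) : V →L[ℝ] V) hw

end JordanInverse

variable {E : Type*} [NormedAddCommGroup E] [InnerProductSpace ℝ E]

namespace IsTracialJordanProduct

variable [FiniteDimensional ℝ E] {mul : E →ₗ[ℝ] E →ₗ[ℝ] E} {e : E}

lemma commute_mul_of_mul_eq_one (h : IsTracialJordanProduct mul e) {v w : E}
    (hinj : Function.Injective (mul v)) (hvw : mul v w = e) : Commute (mul v) (mul w) := by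
  obtain ⟨n, c, lam, hc, hv, hcomm⟩ := h.exists_spectral_decomposition v
  have hmul (i) : mul v (c i) = lam i • c i := by rw [hv, hc.sum_smul_mul]
  have hlam (i) : lam i ≠ 0 := fun hzero => hc.ne_zero i <|
    (injective_iff_map_eq_zero _).1 hinj _ (by rw [hmul, hzero, zero_smul])
  have hw : w = ∑ i, (lam i)⁻¹ • c i := hinj <| by
    simp only [hvw, map_sum, map_smul, hmul, inv_smul_smul₀ (hlam _), hc.sum_eq]
  rw [hw, map_sum]
  exact Commute.sum_right _ _ _ fun i _ => by rw [map_smul]; exact (hcomm i).smul_right _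

lemma mul_mul_eq_of_mul_eq_one (h : IsTracialJordanProduct mul e) {v w : E}
    (hinj : Function.Injective (mul v)) (hvw : mul v w = e) (k : E) :
    mul (mul k v) w = mul v (mul k w) := by
  have hcomm := LinearMap.congr_fun (h.commute_mul_of_mul_eq_one hinj hvw).eq k
  rw [h.comm, h.comm k v, h.comm k w]
  exact hcomm.symm

end IsTracialJordanProduct

namespace IsEuclideanJordanProduct

variable [FiniteDimensional ℝ E] {mul : E →ₗ[ℝ] E →ₗ[ℝ] E} {e : E}

lemma inner_mulExp_left (h : IsEuclideanJordanProduct mul e) (k x y : E) :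
    ⟪mulExp mul k x, y⟫ = ⟪x, mulExp mul k y⟫ := by
  have := FiniteDimensional.complete ℝ E
  have hself : IsSelfAdjoint (mul.toContinuousBilinearMap k) :=
    ContinuousLinearMap.isSelfAdjoint_iff_isSymmetric.2 (h.inner_mul_left k)
  exact ContinuousLinearMap.isSelfAdjoint_iff_isSymmetric.1 hself.exp x y

-- The inverse `W` of `U t = mulExp (t • k) v` solves `W' = -k W`, because `(k U) W = U (k W)`.
lemma hasDerivAt_jordanInverse_mulExp (h : IsEuclideanJordanProduct mul e) (k v : E) {t : ℝ}
    (ht : mulExp mul (t • k) v ∈ symCone mul) :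
    HasDerivAt (fun s : ℝ => jordanInverse mul e (mulExp mul (s • k) v))
      (-mul k (jordanInverse mul e (mulExp mul (t • k) v))) t := by
  have hinj := h.mul_injective_of_mem_symCone ht
  exact hasDerivAt_jordanInverse (hasDerivAt_mulExp_smul_apply k v t) hinj
    (h.mul_mul_eq_of_mul_eq_one hinj (mul_jordanInverse hinj) k)

lemma isOpen_setOf_mulExp_mem (h : IsEuclideanJordanProduct mul e) (k v w : E) :
    IsOpen {t : ℝ | mulExp mul (t • k) v ∈ symCone mul ∧
      mul (mulExp mul (t • k) v) (mulExp mul (-(t • k)) w) = e} := by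
  let F (t : ℝ) : E := mulExp mul (t • k) (jordanInverse mul e (mulExp mul (t • k) v))
  have hF {t : ℝ} (ht : mulExp mul (t • k) v ∈ symCone mul) : HasDerivAt F 0 t :=
    hasDerivAt_mulExp_smul_apply_zero (h.hasDerivAt_jordanInverse_mulExp k v ht)
  refine Metric.isOpen_iff.2 fun t ⟨ht, hmul⟩ => ?_
  obtain ⟨ε, hε, hball⟩ := Metric.isOpen_iff.1
    (isOpen_symCone.preimage (continuous_mulExp_smul_apply (mul := mul) k v)) t ht
  have hFt : F t = w := by
    have hinj := h.mul_injective_of_mem_symCone ht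
    have hinv : jordanInverse mul e (mulExp mul (t • k) v) = mulExp mul (-(t • k)) w :=
      hinj ((mul_jordanInverse hinj).trans hmul.symm)
    rw [show F t = mulExp mul (t • k) (mulExp mul (-(t • k)) w) from congrArg _ hinv, mulExp_neg,
      ContinuousLinearEquiv.apply_symm_apply]
  refine ⟨ε, hε, fun s hs => ⟨hball hs, ?_⟩⟩
  have hFs : F s = w := hFt ▸ Metric.isOpen_ball.is_const_of_deriv_eq_zero
    (convex_ball t ε).isPreconnected
    (fun r hr => (hF (hball hr)).differentiableAt.differentiableWithinAt)
    (fun r hr => (hF (hball hr)).deriv) hs (Metric.mem_ball_self hε)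
  rw [← hFs, mulExp_neg, ContinuousLinearEquiv.symm_apply_apply]
  exact mul_jordanInverse (h.mul_injective_of_mem_symCone (hball hs))

lemma isClosed_setOf_mulExp_mem (h : IsEuclideanJordanProduct mul e) (k v w : E) :
    IsClosed {t : ℝ | mulExp mul (t • k) v ∈ symCone mul ∧
      mul (mulExp mul (t • k) v) (mulExp mul (-(t • k)) w) = e} := by
  have hV : Continuous fun t : ℝ => mulExp mul (t • k) v := continuous_mulExp_smul_apply k v
  have hW : Continuous fun t : ℝ => mulExp mul (-(t • k)) w := by
    simpa only [smul_neg] using continuous_mulExp_smul_apply (mul := mul) (-k) w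
  have hclosure : {t : ℝ | mulExp mul (t • k) v ∈ symCone mul ∧
        mul (mulExp mul (t • k) v) (mulExp mul (-(t • k)) w) = e}
      = {t : ℝ | mulExp mul (t • k) v ∈ closure (symCone mul) ∧
        mul.toContinuousBilinearMap (mulExp mul (t • k) v) (mulExp mul (-(t • k)) w) = e} :=
    Set.ext fun t => ⟨fun ht => ⟨subset_closure ht.1, ht.2⟩,
      fun ht => ⟨h.mem_symCone_of_mem_closure ht.1 ht.2, ht.2⟩⟩
  rw [hclosure]
  exact (isClosed_closure.preimage hV).inter (isClosed_eq (by fun_prop) continuous_const)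

theorem mulExp_mem_symCone_and_mul_mulExp_neg (h : IsEuclideanJordanProduct mul e) (k : E)
    {v w : E} (hv : v ∈ symCone mul) (hvw : mul v w = e) :
    mulExp mul k v ∈ symCone mul ∧ mul (mulExp mul k v) (mulExp mul (-k) w) = e := by
  have huniv := IsClopen.eq_univ
    ⟨h.isClosed_setOf_mulExp_mem k v w, h.isOpen_setOf_mulExp_mem k v w⟩
    ⟨0, by simpa only [Set.mem_ofPred_eq, zero_smul, neg_zero, mulExp_zero_apply] using ⟨hv, hvw⟩⟩
  have hone := Set.eq_univ_iff_forall.1 huniv 1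
  simpa only [Set.mem_ofPred_eq, one_smul] using hone

lemma image_mulExp_symCone (h : IsEuclideanJordanProduct mul e) (k : E) :
    mulExp mul k '' symCone mul = symCone mul := by
  have hmaps (k) {v : E} (hv : v ∈ symCone mul) : mulExp mul k v ∈ symCone mul :=
    (h.mulExp_mem_symCone_and_mul_mulExp_neg k hv
      (mul_jordanInverse (h.mul_injective_of_mem_symCone hv))).1
  refine Set.Subset.antisymm (Set.image_subset_iff.2 fun v hv => hmaps k hv) fun v hv => ?_
  exact ⟨mulExp mul (-k) v, hmaps (-k) hv, by
    rw [mulExp_neg, ContinuousLinearEquiv.apply_symm_apply]⟩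

lemma exists_mulExp_eq (h : IsEuclideanJordanProduct mul e) {x : E} (hx : x ∈ symCone mul) :
    ∃ k, mulExp mul k e = x ∧ mulExp mul k x = mul x x := by
  obtain ⟨n, c, lam, hc, rfl, -⟩ := h.exists_spectral_decomposition x
  have hexp (i) : mulExp mul (∑ j, Real.log (lam j) • c j) (c i) = lam i • c i := by
    rw [mulExp_apply_eq_exp_smul (hc.sum_smul_mul _ i),
      Real.exp_log (h.pos_of_sum_smul_mem_symCone hc hx i)]
  refine ⟨∑ i, Real.log (lam i) • c i, ?_, ?_⟩
  · simp only [← hc.sum_eq, map_sum, hexp]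
  · simp only [map_sum (mulExp mul _), map_smul (mulExp mul _), hexp, hc.sum_smul_mul_sum_smul,
      smul_smul]

end IsEuclideanJordanProduct

end Flow

section Haar

variable {V : Type*} [NormedAddCommGroup V] [NormedSpace ℝ V] [FiniteDimensional ℝ V]
  [MeasurableSpace V] [BorelSpace V] (μ : Measure V) [μ.IsAddHaarMeasure]

lemma setIntegral_image_continuousLinearEquiv {F : Type*} [NormedAddCommGroup F] [NormedSpace ℝ F]
    (g : V ≃L[ℝ] V) {s : Set V} (hs : MeasurableSet s) (f : V → F) :
    ∫ v in g '' s, f v ∂μ = |(g : V →L[ℝ] V).det| • ∫ v in s, f (g v) ∂μ := by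
  rw [integral_image_eq_integral_abs_det_fderiv_smul μ hs
    (fun v _ => g.hasFDerivAt.hasFDerivWithinAt) g.injective.injOn, integral_smul]

variable {μ}

open scoped Pointwise in
lemma measure_eq_zero_or_top_of_smul_subset [Nontrivial V] {t : ℝ} (ht : 1 < t) {s : Set V}
    (hs : t • s ⊆ s) : μ s = 0 ∨ μ s = ⊤ := by
  by_contra! hfin
  have hfactor : 1 < ENNReal.ofReal |t ^ Module.finrank ℝ V| := by
    rw [abs_of_pos (by positivity), ENNReal.one_lt_ofReal]
    exact one_lt_pow₀ ht Module.finrank_pos.ne'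
  have hlt : μ s < μ (t • s) := by
    rw [Measure.addHaar_smul]
    simpa only [one_mul] using ENNReal.mul_lt_mul_left hfin.1 hfin.2 hfactor
  exact hlt.not_ge (measure_mono hs)

open scoped Pointwise in
lemma nonneg_of_integrableOn_exp_neg {Ω : Set V} (hopen : IsOpen Ω)
    (hsmul : ∀ t : ℝ, 0 < t → ∀ x ∈ Ω, t • x ∈ Ω) {φ : V →L[ℝ] ℝ}
    (hint : IntegrableOn (fun x => Real.exp (-φ x)) Ω μ) {x : V} (hx : x ∈ Ω) : 0 ≤ φ x := by
  by_contra! hneg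
  have hx0 : x ≠ 0 := fun h0 => by simp [h0] at hneg
  have := nontrivial_of_ne x 0 hx0
  let B : Set V := Ω ∩ {z | φ z < 0}
  have hBopen : IsOpen B := hopen.inter (isOpen_lt φ.continuous continuous_const)
  have hBfin : μ B ≠ ⊤ := by
    have hone : IntegrableOn (fun _ => (1 : ℝ)) B μ := by
      refine Integrable.mono (hint.mono_set Set.inter_subset_left) (by fun_prop) ?_
      filter_upwards [ae_restrict_mem hBopen.measurableSet] with z hz
      rw [norm_one, Real.norm_eq_abs, Real.abs_exp]
      exact Real.one_le_exp (neg_nonneg.2 hz.2.le)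
    have hzero_or := (integrableOn_const_iff enorm_ne_top).1 hone
    exact (hzero_or.resolve_left (enorm_ne_zero.2 one_ne_zero)).ne
  have hBsmul : (2 : ℝ) • B ⊆ B := by
    rintro _ ⟨z, ⟨hzΩ, hzneg⟩, rfl⟩
    refine ⟨hsmul 2 two_pos z hzΩ, ?_⟩
    change φ ((2 : ℝ) • z) < 0
    rw [map_smul]
    exact smul_neg_of_pos_of_neg two_pos hzneg
  exact (measure_eq_zero_or_top_of_smul_subset one_lt_two hBsmul).elim
    (hBopen.measure_pos μ ⟨x, hx, hneg⟩).ne' hBfin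

end Haar

section Bessel

variable {E : Type*} [NormedAddCommGroup E] [InnerProductSpace ℝ E]
  {mul : E →ₗ[ℝ] E →ₗ[ℝ] E} {e : E}

namespace IsEuclideanJordanProduct

variable [FiniteDimensional ℝ E]

lemma inverse_mulExp (h : IsEuclideanJordanProduct mul e)
    {jinv : E → E} (hjinv : ∀ v ∈ symCone mul, mul v (jinv v) = e) (k : E) {v : E}
    (hv : v ∈ symCone mul) : jinv (mulExp mul k v) = mulExp mul (-k) (jinv v) := by
  obtain ⟨hmem, hmul⟩ := h.mulExp_mem_symCone_and_mul_mulExp_neg k hv (hjinv v hv)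
  exact h.mul_injective_of_mem_symCone hmem ((hjinv _ hmem).trans hmul.symm)

lemma neg_trace_sub_inner_mulExp (h : IsEuclideanJordanProduct mul e)
    {tr : E → ℝ} {jinv : E → E} (htr : ∀ x, tr x = ⟪x, e⟫)
    (hjinv : ∀ v ∈ symCone mul, mul v (jinv v) = e) {k x v : E} (hke : mulExp mul k e = x)
    (hkx : mulExp mul k x = mul x x) (hv : v ∈ symCone mul) :
    -tr (mulExp mul k v) - ⟪mul x x, jinv (mulExp mul k v)⟫ = -⟪x, v + jinv v⟫ := by
  rw [htr, h.inner_mulExp_left, hke, h.inverse_mulExp hjinv k hv, ← h.inner_mulExp_left,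
    mulExp_neg, ← hkx, ContinuousLinearEquiv.symm_apply_apply, inner_add_right,
    real_inner_comm x v, neg_add']

end IsEuclideanJordanProduct

variable [MeasurableSpace E] {μ : Measure E}

theorem IsTracialJordanProduct.isEuclideanJordanProduct [FiniteDimensional ℝ E] [BorelSpace E]
    [μ.IsAddHaarMeasure] (h : IsTracialJordanProduct mul e)
    (hint : ∀ y ∈ symCone mul, IntegrableOn (fun x => Real.exp (-⟪x, y⟫)) (symCone mul) μ) :
    IsEuclideanJordanProduct mul e := by
  have hnonneg : ∀ x ∈ symCone mul, ∀ y ∈ symCone mul, 0 ≤ ⟪x, y⟫ := fun x hx y hy => by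
    rw [real_inner_comm]
    refine nonneg_of_integrableOn_exp_neg (μ := μ) (φ := innerSL ℝ y) isOpen_symCone
      (fun t ht x hx => smul_mem_symCone ht hx) ?_ hx
    simpa only [innerSL_apply_apply, real_inner_comm] using hint y hy
  refine ⟨h, fun x y => ?_⟩
  have hclosure (z : E) := mul_self_mem_closure_symCone h.comm h.one_mul z
  exact closure_minimal (Set.Subset.refl (Set.Ici (0 : ℝ))) isClosed_Ici
    (map_mem_closure₂ (continuous_inner (𝕜 := ℝ)) (hclosure x) (hclosure y) hnonneg)

/-- `Δ` is positive on the cone `Ω` and `C Δ ^ (-p)` is the Laplace transform of the indicator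
function of `Ω`, nondegenerately in `C` and `p`. The determinant of a symmetric cone of rank `r` in
dimension `n` has this property with `p = n / r`. -/
structure HasLaplacePower (μ : Measure E) (Ω : Set E) (Δ : E → ℝ) (C p : ℝ) : Prop where
  pos : ∀ y ∈ Ω, 0 < Δ y
  const_ne_zero : C ≠ 0
  exponent_ne_zero : p ≠ 0
  integral_exp_neg_inner : ∀ y ∈ Ω, ∫ x in Ω, Real.exp (-⟪x, y⟫) ∂μ = C * Δ y ^ (-p)

variable {Δ : E → ℝ} {C p : ℝ}

namespace HasLaplacePower

variable {Ω : Set E} {g : E ≃L[ℝ] E}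

lemma integrableOn_exp_neg_inner (hΔ : HasLaplacePower μ Ω Δ C p) {y : E} (hy : y ∈ Ω) :
    IntegrableOn (fun x => Real.exp (-⟪x, y⟫)) Ω μ := by
  by_contra hint
  have hzero := hΔ.integral_exp_neg_inner y hy
  rw [integral_undef hint] at hzero
  exact mul_ne_zero hΔ.const_ne_zero (Real.rpow_pos_of_pos (hΔ.pos y hy) _).ne' hzero.symm

variable [FiniteDimensional ℝ E] [BorelSpace E] [μ.IsAddHaarMeasure]

lemma rpow_map (hΔ : HasLaplacePower μ Ω Δ C p) (hΩ : MeasurableSet Ω) (hg : g '' Ω = Ω)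
    (hsymm : ∀ x y, ⟪g x, y⟫ = ⟪x, g y⟫) {y : E} (hy : y ∈ Ω) :
    Δ (g y) ^ p = |(g : E →L[ℝ] E).det| * Δ y ^ p := by
  have hgy : g y ∈ Ω := hg ▸ Set.mem_image_of_mem g hy
  have hlap : C * Δ y ^ (-p) = |(g : E →L[ℝ] E).det| * (C * Δ (g y) ^ (-p)) := by
    rw [← hΔ.integral_exp_neg_inner y hy, ← hΔ.integral_exp_neg_inner (g y) hgy, ← smul_eq_mul]
    simp only [← hsymm]
    rw [← setIntegral_image_continuousLinearEquiv μ g hΩ fun x => Real.exp (-⟪x, y⟫), hg]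
  have hC := hΔ.const_ne_zero
  have hpos := Real.rpow_pos_of_pos (hΔ.pos y hy) p
  have hgpos := Real.rpow_pos_of_pos (hΔ.pos (g y) hgy) p
  rw [Real.rpow_neg (hΔ.pos y hy).le, Real.rpow_neg (hΔ.pos (g y) hgy).le] at hlap
  field_simp at hlap
  rw [hlap, mul_comm]

lemma abs_det_eq_rpow (hΔ : HasLaplacePower μ Ω Δ C p) (hΩ : MeasurableSet Ω) (hg : g '' Ω = Ω)
    (hsymm : ∀ x y, ⟪g x, y⟫ = ⟪x, g y⟫) (he : e ∈ Ω) (hΔone : Δ e = 1) :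
    |(g : E →L[ℝ] E).det| = Δ (g e) ^ p := by
  rw [hΔ.rpow_map hΩ hg hsymm he, hΔone, Real.one_rpow, mul_one]

lemma map_eq_mul (hΔ : HasLaplacePower μ Ω Δ C p) (hΩ : MeasurableSet Ω) (hg : g '' Ω = Ω)
    (hsymm : ∀ x y, ⟪g x, y⟫ = ⟪x, g y⟫) (he : e ∈ Ω) (hΔone : Δ e = 1) {y : E} (hy : y ∈ Ω) :
    Δ (g y) = Δ (g e) * Δ y := by
  have hpos {z : E} (hz : z ∈ Ω) : 0 < Δ (g z) := hΔ.pos _ (hg ▸ Set.mem_image_of_mem g hz)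
  have hpow : Δ (g y) ^ p = (Δ (g e) * Δ y) ^ p := by
    rw [Real.mul_rpow (hpos he).le (hΔ.pos y hy).le, ← hΔ.abs_det_eq_rpow hΩ hg hsymm he hΔone,
      hΔ.rpow_map hΩ hg hsymm hy]
  exact (Real.rpow_left_inj (hpos hy).le (mul_pos (hpos he) (hΔ.pos y hy)).le
    hΔ.exponent_ne_zero).1 hpow

end HasLaplacePower

lemma rpow_smul_mul_cpow_neg {a b : ℝ} (ha : 0 < a) (hb : 0 ≤ b) (p : ℝ) (lam z : ℂ) :
    a ^ p • (z * ((a * b : ℝ) : ℂ) ^ (-lam))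
      = (a : ℂ) ^ ((p : ℂ) - lam) * (z * (b : ℂ) ^ (-lam)) := by
  rw [Complex.ofReal_mul, Complex.mul_cpow_ofReal_nonneg ha.le hb, sub_eq_add_neg,
    Complex.cpow_add _ _ (Complex.ofReal_ne_zero.2 ha.ne'), Complex.real_smul,
    Complex.ofReal_cpow ha.le]
  ring

theorem coneKBessel_second_integral_representation_general [FiniteDimensional ℝ E]
    [BorelSpace E] [μ.IsAddHaarMeasure] {tr : E → ℝ} {jinv : E → E}
    (h : IsTracialJordanProduct mul e) (htr : ∀ x, tr x = ⟪x, e⟫)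
    (hΔ : HasLaplacePower μ (symCone mul) Δ C p) (hΔone : Δ e = 1)
    (hjinv : ∀ v ∈ symCone mul, mul v (jinv v) = e) (lam : ℂ) {x : E} (hx : x ∈ symCone mul) :
    coneKBessel μ (symCone mul) Δ tr jinv lam (mul x x)
      = (Δ x : ℂ) ^ ((p : ℂ) - lam) * ∫ v in symCone mul,
          Complex.exp ((-⟪x, v + jinv v⟫ : ℝ) : ℂ) * (Δ v : ℂ) ^ (-lam) ∂μ := by
  have hE : IsEuclideanJordanProduct mul e :=
    h.isEuclideanJordanProduct fun y hy => hΔ.integrableOn_exp_neg_inner hy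
  have hmeas : MeasurableSet (symCone mul) := isOpen_symCone.measurableSet
  have he : e ∈ symCone mul := h.one_mem_symCone
  obtain ⟨k, hke, hkx⟩ := hE.exists_mulExp_eq hx
  have himage := hE.image_mulExp_symCone k
  have hsymm := hE.inner_mulExp_left k
  rw [coneKBessel, ← integral_const_mul]
  nth_rw 1 [← himage]
  rw [setIntegral_image_continuousLinearEquiv μ _ hmeas,
    hΔ.abs_det_eq_rpow hmeas himage hsymm he hΔone, hke, ← integral_smul]
  refine setIntegral_congr_fun hmeas fun v hv => ?_
  simp only [hE.neg_trace_sub_inner_mulExp htr hjinv hke hkx hv,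
    hΔ.map_eq_mul hmeas himage hsymm he hΔone hv, hke]
  exact rpow_smul_mul_cpow_neg (hΔ.pos x hx) (hΔ.pos v hv).le p lam _

end Bessel

section Rank

variable {r : ℕ} {d : ℝ}

lemma dim_div_rank_eq {n : ℝ} (hr : r ≠ 0) (hn : n = r + r * ((r : ℝ) - 1) * d / 2) :
    n / r = 1 + ((r : ℝ) - 1) * d / 2 := by
  have hr0 : (r : ℝ) ≠ 0 := Nat.cast_ne_zero.2 hr
  rw [hn]
  field_simp

lemma two_pi_rpow_mul_prod_Gamma_pos (hd : 0 ≤ d) {l : ℝ} (hl : ((r : ℝ) - 1) * d / 2 < l) :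
    0 < (2 * Real.pi) ^ ((r : ℝ) * ((r : ℝ) - 1) * d / 4)
      * ∏ i ∈ Finset.range r, Real.Gamma (l - (i : ℝ) * d / 2) := by
  refine mul_pos (by positivity) (Finset.prod_pos fun i hi => Real.Gamma_pos_of_pos ?_)
  have hir : (i : ℝ) ≤ r - 1 := by
    rw [le_sub_iff_add_le]
    exact_mod_cast Finset.mem_range.1 hi
  have hmul := mul_le_mul_of_nonneg_right hir hd
  linarith

end Rank

/-- **Second integral representation of the K-Bessel function.**
`𝒦_λ(x²) = Δ(x)^{n/r−λ} ∫_Ω e^{−(x|v+v⁻¹)} Δ(v)^{−λ} dv` for all `x ∈ Ω`. -/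
theorem coneKBessel_second_integral_representation
    {E : Type*} [NormedAddCommGroup E] [InnerProductSpace ℝ E] [FiniteDimensional ℝ E]
    [MeasurableSpace E] [BorelSpace E]
    (μ : Measure E) [μ.IsAddHaarMeasure]
    (jmul : E →ₗ[ℝ] E →ₗ[ℝ] E) (one : E) (Ω : Set E) (Δ tr : E → ℝ) (jinv : E → E)
    (r : ℕ) (d : ℝ) (hr : 1 ≤ r) (hd : 0 < d)
    (hcomm : ∀ x y, jmul x y = jmul y x)
    (hjordan : ∀ x y, jmul (jmul x x) (jmul x y) = jmul x (jmul (jmul x x) y))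
    (hone : ∀ x, jmul one x = x)
    (htr : ∀ x, tr x = ⟪x, one⟫)
    (hinner : ∀ x y, ⟪x, y⟫ = tr (jmul x y))
    (hΩ : Ω = interior {x | ∃ y, x = jmul y y})
    (hdim : (Module.finrank ℝ E : ℝ) = r + r * ((r : ℝ) - 1) * d / 2)
    (hΔpos : ∀ x ∈ Ω, 0 < Δ x)
    (hΔone : Δ one = 1)
    (hΔhom : ∀ c : ℝ, 0 < c → ∀ x, Δ (c • x) = c ^ r * Δ x)
    (hinvΩ : ∀ x ∈ Ω, jinv x ∈ Ω)
    (hinvinv : ∀ x ∈ Ω, jinv (jinv x) = x)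
    (hinvmul : ∀ x ∈ Ω, jmul x (jinv x) = one)
    (hΔinv : ∀ x ∈ Ω, Δ (jinv x) = (Δ x)⁻¹)
    (hLap : ∀ l : ℝ, ((r : ℝ) - 1) * d / 2 < l → ∀ y ∈ Ω,
      ∫ x in Ω, Real.exp (-⟪x, y⟫) * Δ x ^ (l - (Module.finrank ℝ E : ℝ) / r) ∂μ
        = ((2 * Real.pi) ^ ((r : ℝ) * ((r : ℝ) - 1) * d / 4)
            * ∏ i ∈ Finset.range r, Real.Gamma (l - (i : ℝ) * d / 2)) * Δ y ^ (-l))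
    (hsqrt : ∀ x ∈ Ω, ∃ s ∈ Ω, jmul s s = x)
    (lam : ℂ) (x : E) (hx : x ∈ Ω) :
    coneKBessel μ Ω Δ tr jinv lam (jmul x x)
      = ((Δ x : ℂ) ^ ((((Module.finrank ℝ E : ℝ) / r : ℝ) : ℂ) - lam))
          * ∫ v in Ω, Complex.exp (((-⟪x, v + jinv v⟫ : ℝ) : ℂ))
              * ((Δ v : ℂ) ^ (-lam)) ∂μ := by
  obtain rfl : Ω = symCone jmul := hΩ
  have hr1 : (1 : ℝ) ≤ r := mod_cast hr
  have hp := dim_div_rank_eq (Nat.one_le_iff_ne_zero.1 hr) hdim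
  have hbound : 0 ≤ ((r : ℝ) - 1) * d / 2 := by
    have := sub_nonneg.2 hr1
    positivity
  have hlt : ((r : ℝ) - 1) * d / 2 < (Module.finrank ℝ E : ℝ) / r := by linarith
  have hJordan : IsTracialJordanProduct jmul one :=
    { comm := hcomm, jordan := hjordan, one_mul := hone
      inner_eq := fun x y => by rw [hinner, htr] }
  have hLaplace : HasLaplacePower μ (symCone jmul) Δ
      ((2 * Real.pi) ^ ((r : ℝ) * ((r : ℝ) - 1) * d / 4) * ∏ i ∈ Finset.range r,
        Real.Gamma ((Module.finrank ℝ E : ℝ) / r - (i : ℝ) * d / 2))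
      ((Module.finrank ℝ E : ℝ) / r) :=
    { pos := hΔpos
      const_ne_zero := (two_pi_rpow_mul_prod_Gamma_pos hd.le hlt).ne'
      exponent_ne_zero := (hbound.trans_lt hlt).ne'
      integral_exp_neg_inner := fun y hy => by
        simpa only [sub_self, Real.rpow_zero, mul_one] using hLap _ hlt y hy }
  exact coneKBessel_second_integral_representation_general hJordan htr hLaplace hΔone hinvmul lam hx
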